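/- arXiv:2410.02418 — 2 statements merged into one kernel-verified Lean document; each statement's English description precedes it below -/
import Mathlib

section
/- Every Gaussian integer x ∈ ℤ[i] has a 3-NAF (β, D)-representation in base β = i − 1 with digit set D = {0, 1, −1, i, −i}; that is, there exist n ∈ ℕ and digits d_0, …, d_{n−1} ∈ D with x = Σ_{j=0}^{n−1} d_j β^j such that among any three consecutive digits d_{j+2}, d_{j+1}, d_j at most one is nonzero. -/
/-!
The units `1, -1, i, -i` represent the four residue classes modulo `β ^ 3` that are prime to `β`.
So every `x` is `β * y`, or `d + β ^ 3 * y` with a nonzero digit `d`, and attaching `0`, or `d`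
preceded by two zeros, at the least significant end turns a 3-NAF of `y` into one of `x`.
If `x ≠ 0`, then `y` has smaller norm: `N y = N x / 2` in the first case, and in the second, where
`N (β ^ 3) = 8`, the parallelogram law gives `8 * N y = N (x - d) ≤ 2 * N x + 2`, which rules out
`N y ≥ N x ≥ 1`.
-/

open Matrix

noncomputable section

/-- The imaginary unit `i` in the Gaussian integers. -/
def gI : GaussianInt := ⟨0, 1⟩

/-- The base `β = i - 1`. -/
def gβ : GaussianInt := ⟨-1, 1⟩

/-- The digit set `D = {0, 1, -1, i, -i}`. -/
def gD : Set GaussianInt := {0, 1, -1, gI, -gI}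

/-- Value of a digit string `d_{n-1} ⋯ d_0`, given as a list with the least
significant digit first: `gval [d_0, d_1, …, d_{n-1}] = Σ d_j β^j`. -/
def gval (l : List GaussianInt) : GaussianInt :=
  l.foldr (fun d acc => d + gβ * acc) 0

/-- `l` (least significant digit first) is a `(β, D)`-representation of `x`. -/
def gIsRep (x : GaussianInt) (l : List GaussianInt) : Prop :=
  (∀ d ∈ l, d ∈ gD) ∧ gval l = x

/-- A representation is normalized if it is empty or its leading digit
(the last entry of the LSD-first list) is nonzero. -/
def gNormalized (l : List GaussianInt) : Prop := l.getLast? ≠ some 0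

/-- Number of nonzero digits (Hamming weight). -/
def gweight (l : List GaussianInt) : ℕ := (l.filter (fun d => d ≠ 0)).length

/-- `W`-NAF property: among any `W` consecutive digits at most one is nonzero. -/
def gNAF (W : ℕ) (l : List GaussianInt) : Prop :=
  ∀ j k : ℕ, j < k → k < j + W → l.getD j 0 ≠ 0 → l.getD k 0 = 0

section Norm

variable {D : ℤ}

theorem norm_pos_of_ne_zero (hD : D < 0) {x : ℤ√D} (hx : x ≠ 0) : 0 < x.norm :=
  (Zsqrtd.norm_nonneg hD.le x).lt_of_ne' (mt (Zsqrtd.norm_eq_zero_iff hD x).1 hx)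

theorem norm_add_le_two_mul_add (hD : D ≤ 0) (x y : ℤ√D) :
    (x + y).norm ≤ 2 * (x.norm + y.norm) := by
  have parallelogram : (x + y).norm + (x - y).norm = 2 * (x.norm + y.norm) := by
    simp only [Zsqrtd.norm_def, Zsqrtd.re_add, Zsqrtd.im_add, Zsqrtd.re_sub, Zsqrtd.im_sub]
    ring
  linarith [Zsqrtd.norm_nonneg hD (x - y)]

theorem norm_lt_norm_mul (hD : D < 0) {b y : ℤ√D} (hb : 1 < b.norm) (hy : y ≠ 0) :
    y.norm < (b * y).norm := by
  rw [Zsqrtd.norm_mul]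
  exact lt_mul_of_one_lt_left (norm_pos_of_ne_zero hD hy) hb

theorem norm_lt_norm_add_mul (hD : D < 0) {b d y : ℤ√D} (hb : 4 < b.norm) (hd : d.norm ≤ 1)
    (hx : d + b * y ≠ 0) : y.norm < (d + b * y).norm := by
  have hx_pos : 0 < (d + b * y).norm := norm_pos_of_ne_zero hD hx
  have hle : b.norm * y.norm ≤ 2 * ((d + b * y).norm + d.norm) := by
    simpa [Zsqrtd.norm_mul] using norm_add_le_two_mul_add hD.le (d + b * y) (-d)
  by_contra! hyx
  have : 4 * y.norm < b.norm * y.norm := mul_lt_mul_of_pos_right hb (hx_pos.trans_le hyx)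
  linarith

end Norm

theorem zero_mem_gD : (0 : GaussianInt) ∈ gD := Or.inl rfl

theorem norm_le_one_of_mem_gD {d : GaussianInt} (hd : d ∈ gD) : d.norm ≤ 1 := by
  rcases hd with rfl | rfl | rfl | rfl | rfl <;> decide

theorem gβ_dvd_iff {z : GaussianInt} : gβ ∣ z ↔ 2 ∣ z.re + z.im := by
  constructor
  · rintro ⟨y, rfl⟩
    exact ⟨-y.im, by simp only [gβ, Zsqrtd.re_mul, Zsqrtd.im_mul]; ring⟩
  · rintro ⟨m, hm⟩
    refine ⟨⟨m - z.re, -m⟩, Zsqrtd.ext ?_ ?_⟩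
    · simp only [gβ, Zsqrtd.re_mul]
      ring
    · simp only [gβ, Zsqrtd.im_mul]
      linarith

theorem gβ_pow_three : gβ ^ 3 = ⟨2, 2⟩ := rfl

theorem gβ_pow_three_dvd_iff {z : GaussianInt} :
    gβ ^ 3 ∣ z ↔ 4 ∣ z.re + z.im ∧ 4 ∣ z.im - z.re := by
  rw [gβ_pow_three]
  constructor
  · rintro ⟨y, rfl⟩
    simp only [Zsqrtd.re_mul, Zsqrtd.im_mul]
    exact ⟨⟨y.re, by ring⟩, ⟨y.im, by ring⟩⟩
  · rintro ⟨⟨m, hm⟩, ⟨n, hn⟩⟩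
    refine ⟨⟨m, n⟩, Zsqrtd.ext ?_ ?_⟩
    · simp only [Zsqrtd.re_mul]
      linarith
    · simp only [Zsqrtd.im_mul]
      linarith

theorem exists_mem_gD_gβ_pow_three_dvd_sub {x : GaussianInt} (hx : ¬gβ ∣ x) :
    ∃ d ∈ gD, gβ ^ 3 ∣ x - d := by
  rw [gβ_dvd_iff] at hx
  have hsum : (x.re + x.im) % 4 = 1 ∨ (x.re + x.im) % 4 = 3 := by omega
  have hdiff : (x.im - x.re) % 4 = 1 ∨ (x.im - x.re) % 4 = 3 := by omega
  rcases hsum with hsum | hsum <;> rcases hdiff with hdiff | hdiff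
  · refine ⟨gI, by simp [gD], gβ_pow_three_dvd_iff.2 ?_⟩
    simp only [gI, Zsqrtd.re_sub, Zsqrtd.im_sub]
    omega
  · refine ⟨1, by simp [gD], gβ_pow_three_dvd_iff.2 ?_⟩
    simp only [Zsqrtd.re_sub, Zsqrtd.im_sub, Zsqrtd.re_one, Zsqrtd.im_one]
    omega
  · refine ⟨-1, by simp [gD], gβ_pow_three_dvd_iff.2 ?_⟩
    simp only [Zsqrtd.re_sub, Zsqrtd.im_sub, Zsqrtd.re_neg, Zsqrtd.im_neg, Zsqrtd.re_one,
      Zsqrtd.im_one]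
    omega
  · refine ⟨-gI, by simp [gD], gβ_pow_three_dvd_iff.2 ?_⟩
    simp only [gI, Zsqrtd.re_sub, Zsqrtd.im_sub, Zsqrtd.re_neg, Zsqrtd.im_neg]
    omega

theorem gIsRep_nil : gIsRep 0 [] := ⟨by simp, rfl⟩

theorem gIsRep.cons {d y : GaussianInt} {l : List GaussianInt} (hd : d ∈ gD) (h : gIsRep y l) :
    gIsRep (d + gβ * y) (d :: l) :=
  ⟨List.forall_mem_cons.2 ⟨hd, h.1⟩, congrArg (d + gβ * ·) h.2⟩

theorem gIsRep.zero_cons {y : GaussianInt} {l : List GaussianInt} (h : gIsRep y l) :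
    gIsRep (gβ * y) (0 :: l) := by
  simpa only [zero_add] using h.cons zero_mem_gD

theorem gIsRep.replicate_zero_append {y : GaussianInt} {l : List GaussianInt} (h : gIsRep y l)
    (n : ℕ) : gIsRep (gβ ^ n * y) (List.replicate n 0 ++ l) := by
  induction n with
  | zero => simpa using h
  | succ n ih =>
    simpa only [pow_succ', mul_assoc, List.replicate_succ, List.cons_append] using ih.zero_cons

theorem gNAF_nil (W : ℕ) : gNAF W [] := fun _ _ _ _ h => (h rfl).elim

theorem gNAF_cons_iff {W : ℕ} {d : GaussianInt} {l : List GaussianInt} :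
    gNAF W (d :: l) ↔ (d ≠ 0 → ∀ k, k + 1 < W → l.getD k 0 = 0) ∧ gNAF W l := by
  constructor
  · intro h
    exact ⟨fun hd k hk => h 0 (k + 1) k.succ_pos (by omega) hd,
      fun j k hjk hk => h (j + 1) (k + 1) (by omega) (by omega)⟩
  · rintro ⟨hd, hl⟩ (_ | j) (_ | k) hjk hk hj
    · omega
    · exact hd hj k (by omega)
    · omega
    · exact hl j k (by omega) (by omega) hj

theorem gNAF.zero_cons {W : ℕ} {l : List GaussianInt} (h : gNAF W l) : gNAF W (0 :: l) :=
  gNAF_cons_iff.2 ⟨fun h0 => (h0 rfl).elim, h⟩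

theorem gNAF.replicate_zero_append {W : ℕ} {l : List GaussianInt} (h : gNAF W l) (n : ℕ) :
    gNAF W (List.replicate n 0 ++ l) := by
  induction n with
  | zero => exact h
  | succ n ih => exact ih.zero_cons

theorem gNAF.cons_replicate_zero_append {W : ℕ} {l : List GaussianInt} (h : gNAF (W + 1) l)
    (d : GaussianInt) : gNAF (W + 1) (d :: (List.replicate W 0 ++ l)) := by
  refine gNAF_cons_iff.2 ⟨fun _ k hk => ?_, h.replicate_zero_append W⟩
  have hkW : k < W := Nat.lt_of_succ_lt_succ hk
  rw [List.getD_append _ _ _ _ (by rwa [List.length_replicate])]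
  exact List.getD_replicate 0 hkW

/-- `x` has a `W`-NAF `(β, D)`-representation, with leading zeros allowed. -/
def HasNAF (W : ℕ) (x : GaussianInt) : Prop :=
  ∃ l : List GaussianInt, gIsRep x l ∧ gNAF W l

namespace HasNAF

variable {W : ℕ} {y : GaussianInt}

theorem zero (W : ℕ) : HasNAF W 0 := ⟨[], gIsRep_nil, gNAF_nil W⟩

theorem gβ_mul (h : HasNAF W y) : HasNAF W (gβ * y) := by
  obtain ⟨l, hrep, hnaf⟩ := h
  exact ⟨0 :: l, hrep.zero_cons, hnaf.zero_cons⟩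

theorem add_gβ_pow_mul (h : HasNAF (W + 1) y) {d : GaussianInt} (hd : d ∈ gD) :
    HasNAF (W + 1) (d + gβ ^ (W + 1) * y) := by
  obtain ⟨l, hrep, hnaf⟩ := h
  rw [pow_succ', mul_assoc]
  exact ⟨_, (hrep.replicate_zero_append W).cons hd, hnaf.cons_replicate_zero_append d⟩

end HasNAF

/-- Every Gaussian integer has a 3-NAF `(β, D)`-representation. -/
theorem stmt1 (x : GaussianInt) :
    ∃ l : List GaussianInt, gIsRep x l ∧ gNAF 3 l := by
  change HasNAF 3 x
  induction hn : x.norm.toNat using Nat.strong_induction_on generalizing x with | _ n ih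
  subst hn
  have of_norm_lt {y : GaussianInt} (hy : y.norm < x.norm) : HasNAF 3 y :=
    ih _ ((Int.toNat_lt_toNat ((GaussianInt.norm_nonneg y).trans_lt hy)).2 hy) y rfl
  by_cases hx : x = 0
  · exact hx ▸ HasNAF.zero 3
  by_cases hβ : gβ ∣ x
  · obtain ⟨y, rfl⟩ := hβ
    have hy : y.norm < (gβ * y).norm :=
      norm_lt_norm_mul (by decide) (by decide) (right_ne_zero_of_mul hx)
    exact (of_norm_lt hy).gβ_mul
  · obtain ⟨d, hd, y, hdy⟩ := exists_mem_gD_gβ_pow_three_dvd_sub hβ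
    obtain rfl : x = d + gβ ^ 3 * y := eq_add_of_sub_eq' hdy
    have hy : y.norm < (d + gβ ^ 3 * y).norm :=
      norm_lt_norm_add_mul (by decide) (by decide) (norm_le_one_of_mem_gD hd) hx
    exact (of_norm_lt hy).add_gβ_pow_mul hd
end
end

section
/- Let β = i − 1 and D = {0, 1, −1, i, −i}. For x ∈ ℤ[i] and k ∈ ℕ let r(x, k) denote the number of normalized (β, D)-representations of x with exactly k nonzero digits. Then r(0, 0) = 1 and r(0, k+1) = 0 for all k; and for x ≠ 0, r(x, 0) = 0, and moreover r(x, k+1) = r(x/β, k+1) if β divides x, while r(x, k+1) = Σ_{d ∈ {1, −1, i, −i}} r((x − d)/β, k) if β does not divide x (note that β divides x − d for every d ∈ {1, −1, i, −i} when β ∤ x). -/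
/-!
Suppose that `0` is the only digit divisible by the base `b`. The least significant digit `d` of a
representation of `x` satisfies `b ∣ x - d`, so it is `0` exactly when `b ∣ x`, and deleting it
leaves a representation of `(x - d) / b`. For `x ≠ 0` this is a bijection onto the representations
of `x / b`, or of all the `(x - d) / b` with `b ∣ x - d`. Normalization survives the deletion of a
digit `0` because `x / b ≠ 0` has no empty representation.

Cardinalities add up because every number of representations is finite: a nonzero `x` is only
finitely often divisible by the nonunit `b`, so after finitely many deletions the weight drops.

For `b = i - 1`, divisibility of `x` by `b` is the parity of `re x + im x`. Every nonzero digit is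
odd, so all four of them contribute when `x` is odd.
-/

open Matrix

noncomputable section

/-- `gr x k` : number of normalized representations of `x` with exactly `k`
nonzero digits. -/
def gr (x : GaussianInt) (k : ℕ) : ℕ :=
  Nat.card {l : List GaussianInt // gIsRep x l ∧ gNormalized l ∧ gweight l = k}

section Semiring

variable {R : Type*} [Semiring R]

/-- The value `∑ j, d_j * b ^ j` in base `b` of a string of digits in `R`, given as the list
`[d_0, d_1, …]` with the least significant digit first. -/
def digitValue (b : R) (l : List R) : R :=
  l.foldr (fun d acc => d + b * acc) 0

variable [DecidableEq R]

/-- The set of normalized representations of `x` in base `b` with digits in `D` and exactly `k`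
nonzero digits, as lists with the least significant digit first. The leading digit is the last
entry of the list, and the empty list is normalized. -/
def normalizedReps (b : R) (D : Set R) (x : R) (k : ℕ) : Set (List R) :=
  {l | ((∀ d ∈ l, d ∈ D) ∧ digitValue b l = x) ∧ l.getLast? ≠ some 0 ∧
    (l.filter (fun d => d ≠ 0)).length = k}

variable {b d x : R} {D : Set R} {l : List R} {k : ℕ}

lemma mem_normalizedReps_zero_right : l ∈ normalizedReps b D x 0 ↔ l = [] ∧ x = 0 := by
  constructor
  · rintro ⟨⟨-, rfl⟩, hlast, hweight⟩
    have hzero : ∀ d ∈ l, d = 0 := by simpa using hweight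
    obtain rfl : l = [] := by
      by_contra hl
      exact hlast (by rw [List.getLast?_eq_some_getLast hl, hzero _ (List.getLast_mem hl)])
    exact ⟨rfl, rfl⟩
  · rintro ⟨rfl, rfl⟩
    simp [normalizedReps, digitValue]

lemma nil_notMem_normalizedReps (hx : x ≠ 0) : [] ∉ normalizedReps b D x k :=
  fun h => hx h.1.2.symm

lemma nil_notMem_normalizedReps_succ : [] ∉ normalizedReps b D x (k + 1) := by
  simp [normalizedReps]

lemma zero_cons_mem_normalizedReps :
    0 :: l ∈ normalizedReps b D x k ↔
      0 ∈ D ∧ l ≠ [] ∧ ∃ y, b * y = x ∧ l ∈ normalizedReps b D y k := by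
  have hlast : (0 :: l).getLast? ≠ some 0 ↔ l ≠ [] ∧ l.getLast? ≠ some 0 := by
    cases l <;> simp
  have hvalue : digitValue b (0 :: l) = b * digitValue b l := zero_add _
  have hweight : (0 :: l).filter (fun d => d ≠ 0) = l.filter (fun d => d ≠ 0) := by simp
  simp only [normalizedReps, Set.mem_ofPred_eq, hlast, hvalue, hweight, List.forall_mem_cons]
  grind

lemma cons_mem_normalizedReps_succ (hd : d ≠ 0) :
    d :: l ∈ normalizedReps b D x (k + 1) ↔
      d ∈ D ∧ ∃ y, d + b * y = x ∧ l ∈ normalizedReps b D y k := by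
  have hlast : (d :: l).getLast? ≠ some 0 ↔ l.getLast? ≠ some 0 := by
    cases l <;> simp [hd]
  have hvalue : digitValue b (d :: l) = d + b * digitValue b l := rfl
  have hweight : ((d :: l).filter (fun d => d ≠ 0)).length =
      (l.filter (fun d => d ≠ 0)).length + 1 := by simp [hd]
  simp only [normalizedReps, Set.mem_ofPred_eq, hlast, hvalue, hweight, List.forall_mem_cons]
  grind

end Semiring

section CommRing

variable {R : Type*} [CommRing R] [DecidableEq R] {b d x : R} {D : Set R} {l : List R} {k : ℕ}

lemma head_eq_zero_iff_dvd (hD : ∀ d ∈ D, b ∣ d → d = 0) (h : d :: l ∈ normalizedReps b D x k) :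
    d = 0 ↔ b ∣ x := by
  obtain ⟨⟨hmem, rfl⟩, -⟩ := h
  have hdvd : b ∣ digitValue b (d :: l) ↔ b ∣ d := dvd_add_left (dvd_mul_right _ _)
  rw [hdvd]
  exact ⟨fun h => h ▸ dvd_zero b, hD d (hmem d List.mem_cons_self)⟩

lemma normalizedReps_zero_succ (hb : IsLeftRegular b) (hD : ∀ d ∈ D, b ∣ d → d = 0) :
    normalizedReps b D 0 (k + 1) = ∅ := by
  refine Set.eq_empty_of_forall_notMem fun l => ?_
  induction l with
  | nil => exact nil_notMem_normalizedReps_succ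
  | cons d l ih =>
    intro h
    obtain rfl := (head_eq_zero_iff_dvd hD h).mpr (dvd_zero b)
    obtain ⟨-, -, y, hy, hl⟩ := zero_cons_mem_normalizedReps.mp h
    obtain rfl : y = 0 := hb (hy.trans (mul_zero b).symm)
    exact ih hl

end CommRing

section EuclideanDomain

variable {R : Type*} [EuclideanDomain R] [DecidableEq R] {b x : R}

section DigitSet

variable {D : Set R}

lemma normalizedReps_of_dvd (hb : b ≠ 0) (h0 : 0 ∈ D)
    (hD : ∀ d ∈ D, b ∣ d → d = 0) (hx : x ≠ 0) (hdvd : b ∣ x) (k : ℕ) :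
    normalizedReps b D x k = List.cons 0 '' normalizedReps b D (x / b) k := by
  obtain ⟨y, rfl⟩ := hdvd
  rw [mul_div_cancel_left₀ y hb]
  ext l
  constructor
  · intro hl
    cases l with
    | nil => exact absurd hl (nil_notMem_normalizedReps hx)
    | cons d l =>
      obtain rfl := (head_eq_zero_iff_dvd hD hl).mpr (dvd_mul_right b y)
      obtain ⟨-, -, z, hz, hl⟩ := zero_cons_mem_normalizedReps.mp hl
      exact ⟨l, mul_left_cancel₀ hb hz ▸ hl, rfl⟩
  · rintro ⟨l, hl, rfl⟩
    have hne : l ≠ [] := by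
      rintro rfl
      exact nil_notMem_normalizedReps (right_ne_zero_of_mul hx) hl
    exact zero_cons_mem_normalizedReps.mpr ⟨h0, hne, y, rfl, hl⟩

lemma normalizedReps_succ_of_not_dvd (hb : b ≠ 0) (hD : ∀ d ∈ D, b ∣ d → d = 0)
    (hdvd : ¬ b ∣ x) (k : ℕ) :
    normalizedReps b D x (k + 1) =
      ⋃ d ∈ {d ∈ D | b ∣ x - d}, List.cons d '' normalizedReps b D ((x - d) / b) k := by
  ext l
  simp only [Set.mem_iUnion, Set.mem_ofPred_eq, exists_prop]
  constructor
  · intro hl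
    cases l with
    | nil => exact absurd hl nil_notMem_normalizedReps_succ
    | cons d l =>
      have hd : d ≠ 0 := mt (head_eq_zero_iff_dvd hD hl).mp hdvd
      obtain ⟨hmem, y, rfl, hl⟩ := (cons_mem_normalizedReps_succ hd).mp hl
      refine ⟨d, ⟨hmem, ?_⟩, l, ?_, rfl⟩
      · simp
      · rwa [add_sub_cancel_left, mul_div_cancel_left₀ y hb]
  · rintro ⟨d, ⟨hmem, hsub⟩, l, hl, rfl⟩
    have hd : d ≠ 0 := by
      rintro rfl
      exact hdvd (by simpa using hsub)
    refine (cons_mem_normalizedReps_succ hd).mpr ⟨hmem, (x - d) / b, ?_, hl⟩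
    rw [EuclideanDomain.mul_div_cancel' hb hsub, add_sub_cancel]

lemma finite_normalizedReps (hfin : D.Finite) (hb : b ≠ 0) (hu : ¬ IsUnit b) (h0 : 0 ∈ D)
    (hD : ∀ d ∈ D, b ∣ d → d = 0) (x : R) (k : ℕ) :
    (normalizedReps b D x k).Finite := by
  induction k generalizing x with
  | zero =>
    exact (Set.finite_singleton []).subset fun l hl => (mem_normalizedReps_zero_right.mp hl).1
  | succ k ih =>
    induction x using (wellFounded_dvdNotUnit (α := R)).induction with
    | _ x ihx =>
      by_cases hx : x = 0
      · rw [hx, normalizedReps_zero_succ (IsRegular.of_ne_zero hb).left hD]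
        exact Set.finite_empty
      by_cases hdvd : b ∣ x
      · rw [normalizedReps_of_dvd hb h0 hD hx hdvd]
        obtain ⟨y, rfl⟩ := hdvd
        rw [mul_div_cancel_left₀ y hb]
        exact (ihx y ⟨right_ne_zero_of_mul hx, b, hu, mul_comm b y⟩).image _
      · rw [normalizedReps_succ_of_not_dvd hb hD hdvd]
        exact (hfin.subset (Set.sep_subset _ _)).biUnion fun d _ => (ih _).image _

end DigitSet

variable [DecidablePred (b ∣ ·)] {D : Finset R}

lemma ncard_normalizedReps_succ_of_not_dvd (hb : b ≠ 0) (hu : ¬ IsUnit b) (h0 : 0 ∈ D)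
    (hD : ∀ d ∈ D, b ∣ d → d = 0) (hdvd : ¬ b ∣ x) (k : ℕ) :
    (normalizedReps b D x (k + 1)).ncard =
      ∑ d ∈ D with b ∣ x - d, (normalizedReps b D ((x - d) / b) k).ncard := by
  have hdisj : Pairwise (Function.onFun Disjoint
      fun d => List.cons d '' normalizedReps b D ((x - d) / b) k) := by
    intro d e hde
    rw [Function.onFun, Set.disjoint_left]
    rintro _ ⟨l, -, rfl⟩ ⟨m, -, hm⟩
    exact hde (List.cons.inj hm).1.symm
  have hfilter : {d | d ∈ (D : Set R) ∧ b ∣ x - d} = ↑{d ∈ D | b ∣ x - d} := by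
    simp only [Finset.coe_filter, Finset.mem_coe]
  rw [normalizedReps_succ_of_not_dvd hb hD hdvd, hfilter,
    (Finset.finite_toSet _).ncard_biUnion
      (fun _ _ => (finite_normalizedReps D.finite_toSet hb hu h0 hD _ k).image _)
      (hdisj.set_pairwise _),
    finsum_mem_coe_finset]
  simp only [Set.ncard_image_of_injective _ List.cons_injective]

theorem stmt2_general (hb : b ≠ 0) (hu : ¬ IsUnit b) (h0 : 0 ∈ D)
    (hD : ∀ d ∈ D, b ∣ d → d = 0) :
    (normalizedReps b D 0 0).ncard = 1 ∧ (∀ k : ℕ, (normalizedReps b D 0 (k + 1)).ncard = 0) ∧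
    ∀ x : R, x ≠ 0 →
      (normalizedReps b D x 0).ncard = 0 ∧
      ∀ k : ℕ,
        (b ∣ x →
          (normalizedReps b D x (k + 1)).ncard = (normalizedReps b D (x / b) (k + 1)).ncard) ∧
        (¬ b ∣ x →
          (normalizedReps b D x (k + 1)).ncard =
            ∑ d ∈ D with b ∣ x - d, (normalizedReps b D ((x - d) / b) k).ncard) := by
  refine ⟨?_, fun k => ?_, fun x hx => ⟨?_, fun k => ⟨?_, ?_⟩⟩⟩
  · rw [Set.ncard_eq_one]
    exact ⟨[], Set.ext fun l => by simp [mem_normalizedReps_zero_right]⟩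
  · rw [normalizedReps_zero_succ (IsRegular.of_ne_zero hb).left hD, Set.ncard_empty]
  · rw [Set.eq_empty_of_forall_notMem fun l hl => hx (mem_normalizedReps_zero_right.mp hl).2,
      Set.ncard_empty]
  · intro hdvd
    rw [normalizedReps_of_dvd hb h0 hD hx hdvd,
      Set.ncard_image_of_injective _ List.cons_injective]
  · exact fun hdvd => ncard_normalizedReps_succ_of_not_dvd hb hu h0 hD hdvd k

end EuclideanDomain

/-- The digit set `gD` as a `Finset`, so that one can sum over it. -/
def gDigits : Finset GaussianInt := {0, 1, -1, gI, -gI}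

lemma gr_eq_ncard_normalizedReps (x : GaussianInt) (k : ℕ) :
    gr x k = (normalizedReps gβ gDigits x k).ncard := by
  have hD : (gDigits : Set GaussianInt) = gD := by simp [gDigits, gD]
  rw [hD]
  rfl

lemma gβ_dvd_iff_even {x : GaussianInt} : gβ ∣ x ↔ Even (x.re + x.im) := by
  rw [Int.even_iff]
  constructor
  · rintro ⟨y, rfl⟩
    simp only [gβ, Zsqrtd.re_mul, Zsqrtd.im_mul]
    omega
  · intro h
    refine ⟨⟨(x.im - x.re) / 2, -((x.re + x.im) / 2)⟩, ?_⟩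
    ext <;> simp [gβ] <;> omega

lemma gβ_ne_zero : gβ ≠ 0 := by
  simp [gβ, Zsqrtd.ext_iff]

lemma not_isUnit_gβ : ¬ IsUnit gβ := by
  simp [isUnit_iff_dvd_one, gβ_dvd_iff_even]

lemma eq_zero_of_mem_gDigits_of_gβ_dvd : ∀ d ∈ gDigits, gβ ∣ d → d = 0 := by
  simp [gDigits, gβ_dvd_iff_even, gI]

lemma gβ_dvd_sub_of_not_dvd {x d : GaussianInt} (hx : ¬ gβ ∣ x) (hd : ¬ gβ ∣ d) :
    gβ ∣ x - d := by
  rw [gβ_dvd_iff_even] at *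
  rw [Zsqrtd.re_sub, Zsqrtd.im_sub]
  grind

lemma sum_gDigits_of_not_dvd {M : Type*} [AddCommMonoid M] [DecidablePred (gβ ∣ ·)]
    {x : GaussianInt} (hx : ¬ gβ ∣ x) (f : GaussianInt → M) :
    ∑ d ∈ gDigits with gβ ∣ x - d, f (x - d) =
      f (x - 1) + f (x + 1) + f (x - gI) + f (x + gI) := by
  have hfilter : {d ∈ gDigits | gβ ∣ x - d} = {1, -1, gI, -gI} := by
    have hdvd : ∀ d ∈ ({1, -1, gI, -gI} : Finset GaussianInt), gβ ∣ x - d := by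
      intro d hd
      refine gβ_dvd_sub_of_not_dvd hx fun h => ?_
      obtain rfl := eq_zero_of_mem_gDigits_of_gβ_dvd d (Finset.mem_insert_of_mem hd) h
      simp [gI, Zsqrtd.ext_iff] at hd
    rw [gDigits, Finset.filter_insert, if_neg (by rwa [sub_zero]), Finset.filter_true_of_mem hdvd]
  rw [hfilter]
  simp [Finset.sum_insert, gI, Zsqrtd.ext_iff, add_assoc]

/-- The recurrence for the counting function `r(x, k)`. -/
theorem stmt2 :
    gr 0 0 = 1 ∧ (∀ k : ℕ, gr 0 (k + 1) = 0) ∧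
    ∀ x : GaussianInt, x ≠ 0 →
      gr x 0 = 0 ∧
      ∀ k : ℕ,
        (gβ ∣ x → gr x (k + 1) = gr (x / gβ) (k + 1)) ∧
        (¬ gβ ∣ x →
          gr x (k + 1) =
            gr ((x - 1) / gβ) k + gr ((x + 1) / gβ) k +
              gr ((x - gI) / gβ) k + gr ((x + gI) / gβ) k) := by
  classical
  simp only [gr_eq_ncard_normalizedReps]
  obtain ⟨h00, h0, h⟩ := stmt2_general gβ_ne_zero not_isUnit_gβ (by simp [gDigits])
    eq_zero_of_mem_gDigits_of_gβ_dvd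
  refine ⟨h00, h0, fun x hx => ⟨(h x hx).1, fun k => ⟨((h x hx).2 k).1, fun hdvd => ?_⟩⟩⟩
  rw [((h x hx).2 k).2 hdvd]
  exact sum_gDigits_of_not_dvd hdvd fun y => (normalizedReps gβ gDigits (y / gβ) k).ncard
end
end
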